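/- Let x ∈ W²_n, z₀ ∈ ℝ^q and θ ∈ int S, and let (x̂_i, ζ_i, ϑ_i) be a sequence with x̂_i ∈ PL(𝒫_i, ℝⁿ), ζ_i ∈ ℝ^q, ϑ_i ∈ S such that lim_{i→∞} (‖x̂_i − x‖_{W²} + |ζ_i − z₀| + |ϑ_i − θ|) = 0, and let ẑ_i ∈ PL(𝒫_i, ℝ^q) be the trapezoidally-discretized clean-state path associated with (x̂_i, ζ_i, ϑ_i). Then the functions ẑ_i are Lipschitz equicontinuous: there exists L_ẑ > 0 such that |ẑ_i(t) − ẑ_i(τ)| ≤ L_ẑ |t − τ| for all t, τ ∈ 𝒯 and all i ∈ ℕ. -/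

import Mathlib

open MeasureTheory Filter Set

/-!
Convergence in `W²` bounds the inputs `x̂_i` uniformly in the supremum norm, by the embedding
`W² ⊆ C⁰`. On bounded inputs and parameters `h` is bounded at `z = 0` by compactness, so its
Lipschitz continuity in `z` gives linear growth `|h| ≤ L (c + |z|)`. The quantity `w = c + |ẑ_i|`
then satisfies at the nodes the implicit inequality `w' ≤ w + (L δ / 2) (w + w')`, and since
`L δ / 2` stays below some `ρ < 1` this self-improves to `w' ≤ exp (L δ / (1 - ρ)) w`. Hence the
nodal values are bounded uniformly in `i`, and so are the slopes of the piecewise affine `ẑ_i`.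
-/

section DiscreteGronwall

variable {L ρ : ℝ}

lemma le_exp_mul_of_le_add_trapezoid {a b δ : ℝ} (hρ : ρ < 1) (ha : 0 ≤ a) (hLδ : 0 ≤ L * δ)
    (hδ : L * δ ≤ 2 * ρ) (hab : b ≤ a + L * δ / 2 * (a + b)) :
    b ≤ Real.exp (L / (1 - ρ) * δ) * a := by
  have hgap : 0 < 1 - L * δ / 2 := by linarith
  have hrate : L * δ ≤ (1 - L * δ / 2) * (L / (1 - ρ) * δ) := by
    calc L * δ = (1 - ρ) * (L * δ / (1 - ρ)) := by field_simp [(sub_pos.2 hρ).ne']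
      _ ≤ (1 - L * δ / 2) * (L * δ / (1 - ρ)) := by
          have := div_nonneg hLδ (sub_pos.2 hρ).le
          gcongr
          linarith
      _ = (1 - L * δ / 2) * (L / (1 - ρ) * δ) := by ring
  have hfactor : 1 + L * δ / 2 ≤ (1 - L * δ / 2) * Real.exp (L / (1 - ρ) * δ) := by
    nlinarith [Real.add_one_le_exp (L / (1 - ρ) * δ)]
  refine le_of_mul_le_mul_left ?_ hgap
  calc (1 - L * δ / 2) * b ≤ (1 + L * δ / 2) * a := by linarith
    _ ≤ (1 - L * δ / 2) * Real.exp (L / (1 - ρ) * δ) * a := by gcongr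
    _ = (1 - L * δ / 2) * (Real.exp (L / (1 - ρ) * δ) * a) := mul_assoc _ _ _

lemma le_exp_mul_of_forall_le_add_trapezoid {N : ℕ} {t w : ℕ → ℝ} (hL : 0 ≤ L) (hρ : ρ < 1)
    (ht : MonotoneOn t (Iic N)) (hmesh : ∀ k < N, L * (t (k + 1) - t k) ≤ 2 * ρ)
    (hw : ∀ k ≤ N, 0 ≤ w k)
    (hstep : ∀ k < N, w (k + 1) ≤ w k + L * (t (k + 1) - t k) / 2 * (w k + w (k + 1))) :
    ∀ k ≤ N, w k ≤ Real.exp (L / (1 - ρ) * (t k - t 0)) * w 0 := by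
  intro k hk
  induction k with
  | zero => simp
  | succ k ih =>
    have hδ : 0 ≤ t (k + 1) - t k := sub_nonneg.2 (ht (k.le_succ.trans hk) hk k.le_succ)
    calc w (k + 1) ≤ Real.exp (L / (1 - ρ) * (t (k + 1) - t k)) * w k :=
          le_exp_mul_of_le_add_trapezoid hρ (hw k (by omega)) (mul_nonneg hL hδ)
            (hmesh k hk) (hstep k hk)
      _ ≤ Real.exp (L / (1 - ρ) * (t (k + 1) - t k)) *
            (Real.exp (L / (1 - ρ) * (t k - t 0)) * w 0) := by
          gcongr
          exact ih (by omega)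
      _ = Real.exp (L / (1 - ρ) * (t (k + 1) - t 0)) * w 0 := by
          rw [← mul_assoc, ← Real.exp_add]
          ring_nf

end DiscreteGronwall

section LipschitzGluing

variable {α : Type*} [PseudoMetricSpace α] {f : ℝ → α} {K : NNReal}

lemma lipschitzOnWith_Icc_trans {a b c : ℝ} (hab : LipschitzOnWith K f (Icc a b))
    (hbc : LipschitzOnWith K f (Icc b c)) : LipschitzOnWith K f (Icc a c) := by
  have across : ∀ s ∈ Icc a b, ∀ u ∈ Icc b c, dist (f s) (f u) ≤ K * dist s u := by
    intro s hs u hu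
    calc dist (f s) (f u) ≤ dist (f s) (f b) + dist (f b) (f u) := dist_triangle _ _ _
      _ ≤ K * dist s b + K * dist b u :=
          add_le_add (hab.dist_le_mul s hs b ⟨hs.1.trans hs.2, le_rfl⟩)
            (hbc.dist_le_mul b ⟨le_rfl, hu.1.trans hu.2⟩ u hu)
      _ = K * dist s u := by
          rw [← mul_add, dist_comm s b, dist_comm b u, dist_comm s u, Real.dist_eq, Real.dist_eq,
            Real.dist_eq, abs_of_nonneg (sub_nonneg.2 hs.2), abs_of_nonneg (sub_nonneg.2 hu.1),
            abs_of_nonneg (sub_nonneg.2 (hs.2.trans hu.1))]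
          ring
  refine LipschitzOnWith.of_dist_le_mul fun s hs u hu => ?_
  rcases le_total s b with hsb | hbs <;> rcases le_total u b with hub | hbu
  · exact hab.dist_le_mul s ⟨hs.1, hsb⟩ u ⟨hu.1, hub⟩
  · exact across s ⟨hs.1, hsb⟩ u ⟨hbu, hu.2⟩
  · rw [dist_comm (f s), dist_comm s]
    exact across u ⟨hu.1, hub⟩ s ⟨hbs, hs.2⟩
  · exact hbc.dist_le_mul s ⟨hbs, hs.2⟩ u ⟨hbu, hu.2⟩

lemma lipschitzOnWith_Icc_of_forall_lt {N : ℕ} {t : ℕ → ℝ}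
    (hf : ∀ k < N, LipschitzOnWith K f (Icc (t k) (t (k + 1)))) :
    LipschitzOnWith K f (Icc (t 0) (t N)) := by
  induction N with
  | zero => simp [LipschitzOnWith]
  | succ N ih =>
    exact lipschitzOnWith_Icc_trans (ih fun k hk => hf k (by omega)) (hf N (by omega))

end LipschitzGluing

/-- The path `z` follows the trapezoidal rule for `ż = g (t, z)` on the grid `t 0, …, t N`: on each
cell it is affine with slope the mean of `g` at the two end nodes. The relation is implicit, as
`z (t (k + 1))` occurs on both sides. -/
def IsTrapezoidalPath {F : Type*} [AddCommGroup F] [Module ℝ F] (N : ℕ) (t : ℕ → ℝ)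
    (g : ℝ → F → F) (z : ℝ → F) : Prop :=
  ∀ k < N, ∀ s ∈ Ioc (t k) (t (k + 1)),
    z s = z (t k) + ((s - t k) / 2) • (g (t k) (z (t k)) + g (t (k + 1)) (z (t (k + 1))))

namespace IsTrapezoidalPath

variable {F : Type*} [SeminormedAddCommGroup F] [NormedSpace ℝ F] {N : ℕ} {t : ℕ → ℝ}
  {g : ℝ → F → F} {z : ℝ → F}

lemma eq_of_mem_Icc (hz : IsTrapezoidalPath N t g z) {k : ℕ} (hk : k < N) {s : ℝ}
    (hs : s ∈ Icc (t k) (t (k + 1))) :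
    z s = z (t k) + ((s - t k) / 2) • (g (t k) (z (t k)) + g (t (k + 1)) (z (t (k + 1)))) := by
  rcases hs.1.eq_or_lt with rfl | hlt
  · simp
  · exact hz k hk s ⟨hlt, hs.2⟩

lemma lipschitzOnWith (hz : IsTrapezoidalPath N t g z) {K : NNReal}
    (hg : ∀ k ≤ N, ‖g (t k) (z (t k))‖ ≤ K) : LipschitzOnWith K z (Icc (t 0) (t N)) := by
  refine lipschitzOnWith_Icc_of_forall_lt fun k hk =>
    LipschitzOnWith.of_dist_le_mul fun s hs u hu => ?_
  set v := g (t k) (z (t k)) + g (t (k + 1)) (z (t (k + 1)))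
  have hv : ‖v‖ ≤ 2 * K :=
    (norm_add_le_of_le (hg k hk.le) (hg (k + 1) hk)).trans_eq (two_mul _).symm
  have hdiff : z s - z u = ((s - u) / 2) • v := by
    rw [hz.eq_of_mem_Icc hk hs, hz.eq_of_mem_Icc hk hu, add_sub_add_left_eq_sub, ← sub_smul,
      ← sub_div, sub_sub_sub_cancel_right]
  calc dist (z s) (z u) = dist s u / 2 * ‖v‖ := by
        rw [dist_eq_norm, hdiff, norm_smul, norm_div, Real.norm_two, dist_eq_norm]
    _ ≤ dist s u / 2 * (2 * K) := by gcongr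
    _ = K * dist s u := by ring

lemma norm_succ_le (hz : IsTrapezoidalPath N t g z) {k : ℕ} (hk : k < N) (htk : t k ≤ t (k + 1)) :
    ‖z (t (k + 1))‖ ≤ ‖z (t k)‖ + (t (k + 1) - t k) / 2 *
      (‖g (t k) (z (t k))‖ + ‖g (t (k + 1)) (z (t (k + 1)))‖) := by
  have hδ : 0 ≤ (t (k + 1) - t k) / 2 := by linarith
  calc ‖z (t (k + 1))‖
      = ‖z (t k) + ((t (k + 1) - t k) / 2) •
          (g (t k) (z (t k)) + g (t (k + 1)) (z (t (k + 1))))‖ :=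
        congrArg norm (hz.eq_of_mem_Icc hk ⟨htk, le_rfl⟩)
    _ ≤ ‖z (t k)‖ + (t (k + 1) - t k) / 2 *
          ‖g (t k) (z (t k)) + g (t (k + 1)) (z (t (k + 1)))‖ := by
        rw [← norm_smul_of_nonneg hδ]
        exact norm_add_le _ _
    _ ≤ ‖z (t k)‖ + (t (k + 1) - t k) / 2 *
          (‖g (t k) (z (t k))‖ + ‖g (t (k + 1)) (z (t (k + 1)))‖) := by
        gcongr
        exact norm_add_le _ _

lemma add_norm_le_exp_mul (hz : IsTrapezoidalPath N t g z) {L c ρ : ℝ} (hL : 0 ≤ L) (hc : 0 ≤ c)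
    (hρ : ρ < 1) (ht : MonotoneOn t (Iic N)) (hmesh : ∀ k < N, L * (t (k + 1) - t k) ≤ 2 * ρ)
    (hg : ∀ k ≤ N, ‖g (t k) (z (t k))‖ ≤ L * (c + ‖z (t k)‖)) :
    ∀ k ≤ N, c + ‖z (t k)‖ ≤ Real.exp (L / (1 - ρ) * (t k - t 0)) * (c + ‖z (t 0)‖) := by
  refine le_exp_mul_of_forall_le_add_trapezoid (w := fun k => c + ‖z (t k)‖) hL hρ ht hmesh
    (fun k _ => by positivity) fun k hk => ?_
  have htk : t k ≤ t (k + 1) := ht hk.le hk k.le_succ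
  have : 0 ≤ (t (k + 1) - t k) / 2 := by linarith
  calc c + ‖z (t (k + 1))‖
      ≤ c + (‖z (t k)‖ + (t (k + 1) - t k) / 2 *
          (‖g (t k) (z (t k))‖ + ‖g (t (k + 1)) (z (t (k + 1)))‖)) := by
        gcongr
        exact hz.norm_succ_le hk htk
    _ ≤ c + (‖z (t k)‖ + (t (k + 1) - t k) / 2 *
          (L * (c + ‖z (t k)‖) + L * (c + ‖z (t (k + 1))‖))) := by
        gcongr
        exacts [hg k hk.le, hg (k + 1) hk]
    _ = c + ‖z (t k)‖ + L * (t (k + 1) - t k) / 2 * (c + ‖z (t k)‖ + (c + ‖z (t (k + 1))‖)) := by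
        ring

lemma lipschitzOnWith_of_linear_growth (hz : IsTrapezoidalPath N t g z) {L c ρ : ℝ} (hL : 0 ≤ L)
    (hc : 0 ≤ c) (hρ : ρ < 1) (ht : MonotoneOn t (Iic N))
    (hmesh : ∀ k < N, L * (t (k + 1) - t k) ≤ 2 * ρ)
    (hg : ∀ k ≤ N, ‖g (t k) (z (t k))‖ ≤ L * (c + ‖z (t k)‖)) :
    LipschitzOnWith (L * (Real.exp (L / (1 - ρ) * (t N - t 0)) * (c + ‖z (t 0)‖))).toNNReal z
      (Icc (t 0) (t N)) := by
  refine hz.lipschitzOnWith fun k hk => le_trans ?_ (Real.le_coe_toNNReal _)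
  have : 0 ≤ L / (1 - ρ) := div_nonneg hL (sub_pos.2 hρ).le
  calc ‖g (t k) (z (t k))‖ ≤ L * (c + ‖z (t k)‖) := hg k hk
    _ ≤ L * (Real.exp (L / (1 - ρ) * (t k - t 0)) * (c + ‖z (t 0)‖)) := by
        gcongr
        exact hz.add_norm_le_exp_mul hL hc hρ ht hmesh hg k hk
    _ ≤ L * (Real.exp (L / (1 - ρ) * (t N - t 0)) * (c + ‖z (t 0)‖)) := by
        gcongr
        exact ht hk (mem_Iic.2 le_rfl) hk

end IsTrapezoidalPath

lemma exists_linear_growth_of_isCompact {X F : Type*} [TopologicalSpace X]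
    [SeminormedAddCommGroup F] {A K : Set X} {g : X → F → F} {L : ℝ} (hK : IsCompact K)
    (hAK : A ⊆ K) (hcont : ContinuousOn (fun p => g p 0) K) (hL : 0 < L)
    (hLip : ∀ p ∈ A, ∀ b, ‖g p b - g p 0‖ ≤ L * ‖b‖) :
    ∃ c > 0, ∀ p ∈ A, ∀ b, ‖g p b‖ ≤ L * (c + ‖b‖) := by
  obtain ⟨M, hM⟩ := hK.exists_bound_of_continuousOn hcont
  refine ⟨max M 1 / L, by positivity, fun p hp b => ?_⟩
  calc ‖g p b‖ ≤ ‖g p 0‖ + ‖g p b - g p 0‖ := norm_le_norm_add_norm_sub' _ _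
    _ ≤ max M 1 + L * ‖b‖ := add_le_add ((hM p (hAK hp)).trans (le_max_left _ _)) (hLip p hp b)
    _ = L * (max M 1 / L + ‖b‖) := by field_simp

section SobolevPaths

variable {E : Type*} [NormedAddCommGroup E] {T : ℝ}

lemma integral_norm_le_sqrt_measureReal_mul_sqrt {α : Type*} [MeasurableSpace α] {μ : Measure α}
    [IsFiniteMeasure μ] {f : α → E} (hf : MemLp f 2 μ) :
    ∫ a, ‖f a‖ ∂μ ≤ √(μ.real univ) * √(∫ a, ‖f a‖ ^ 2 ∂μ) := by
  have hf' : MemLp f (ENNReal.ofReal 2) μ := by simpa using hf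
  have hone : MemLp (fun _ : α => (1 : ℝ)) (ENNReal.ofReal 2) μ := memLp_const 1
  have := integral_mul_le_Lp_mul_Lq_of_nonneg Real.HolderConjugate.two_two
    (Eventually.of_forall fun _ => zero_le_one) (Eventually.of_forall fun a => norm_nonneg (f a))
    hone hf'.norm
  simpa [Real.sqrt_eq_rpow] using this

/-- The `W²` norm on `[0, T]` of the function with initial value `a` and a.e. derivative `v`. If
`‖v‖ ^ 2` is not integrable, the integral takes the junk value `0`. -/
noncomputable def w2Norm (T : ℝ) (a : E) (v : ℝ → E) : ℝ :=
  √(‖a‖ ^ 2 + ∫ s in Ioc 0 T, ‖v s‖ ^ 2)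

lemma norm_le_w2Norm (a : E) (v : ℝ → E) : ‖a‖ ≤ w2Norm T a v :=
  Real.le_sqrt_of_sq_le (le_add_of_nonneg_right (integral_nonneg fun _ => sq_nonneg _))

lemma sqrt_integral_sq_norm_le_w2Norm (a : E) (v : ℝ → E) :
    √(∫ s in Ioc 0 T, ‖v s‖ ^ 2) ≤ w2Norm T a v :=
  Real.sqrt_le_sqrt (le_add_of_nonneg_left (sq_nonneg _))

variable [NormedSpace ℝ E]

/-- `y` belongs to `W²` on `[0, T]` with a.e. derivative `y'`. Absolute continuity is encoded by the
fundamental theorem of calculus. -/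
structure HasW2Deriv (T : ℝ) (y y' : ℝ → E) : Prop where
  memLp : MemLp y' 2 (volume.restrict (Ioc 0 T))
  eq_add_integral : ∀ s ∈ Icc 0 T, y s = y 0 + ∫ u in Ioc 0 s, y' u

namespace HasW2Deriv

variable {x x' y y' : ℝ → E}

lemma integrableOn (hy : HasW2Deriv T y y') : IntegrableOn y' (Ioc 0 T) :=
  hy.memLp.integrable one_le_two

lemma sub (hy : HasW2Deriv T y y') (hx : HasW2Deriv T x x') :
    HasW2Deriv T (fun s => y s - x s) (fun s => y' s - x' s) where
  memLp := hy.memLp.sub hx.memLp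
  eq_add_integral s hs := by
    have hsub : Ioc 0 s ⊆ Ioc 0 T := Ioc_subset_Ioc_right hs.2
    rw [integral_sub (hy.integrableOn.mono_set hsub) (hx.integrableOn.mono_set hsub),
      hy.eq_add_integral s hs, hx.eq_add_integral s hs]
    abel

lemma norm_le (hy : HasW2Deriv T y y') {s : ℝ} (hs : s ∈ Icc 0 T) :
    ‖y s‖ ≤ (1 + √T) * w2Norm T (y 0) y' := by
  have hT : (volume.restrict (Ioc 0 T)).real univ = T := by simp [hs.1.trans hs.2]
  calc ‖y s‖ ≤ ‖y 0‖ + ‖∫ u in Ioc 0 s, y' u‖ := by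
        rw [hy.eq_add_integral s hs]
        exact norm_add_le _ _
    _ ≤ ‖y 0‖ + ∫ u in Ioc 0 T, ‖y' u‖ := by
        gcongr
        exact (norm_integral_le_integral_norm _).trans (setIntegral_mono_set hy.integrableOn.norm
          (Eventually.of_forall fun _ => norm_nonneg _) (Ioc_subset_Ioc_right hs.2).eventuallyLE)
    _ ≤ w2Norm T (y 0) y' + √T * w2Norm T (y 0) y' := by
        gcongr
        · exact norm_le_w2Norm _ _
        · refine (integral_norm_le_sqrt_measureReal_mul_sqrt hy.memLp).trans ?_
          rw [hT]
          gcongr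
          exact sqrt_integral_sq_norm_le_w2Norm _ _
    _ = (1 + √T) * w2Norm T (y 0) y' := by ring

lemma exists_norm_le_of_bddAbove {ι : Type*} {y y' : ι → ℝ → E} (hx : HasW2Deriv T x x')
    (hy : ∀ i, HasW2Deriv T (y i) (y' i))
    (hbdd : BddAbove (range fun i => w2Norm T (y i 0 - x 0) fun s => y' i s - x' s)) :
    ∃ R, ∀ i, ∀ s ∈ Icc 0 T, ‖y i s‖ ≤ R := by
  obtain ⟨C, hC⟩ := hbdd
  refine ⟨(1 + √T) * w2Norm T (x 0) x' + (1 + √T) * C, fun i s hs => ?_⟩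
  calc ‖y i s‖ ≤ ‖x s‖ + ‖y i s - x s‖ := norm_le_norm_add_norm_sub' _ _
    _ ≤ (1 + √T) * w2Norm T (x 0) x' + (1 + √T) * C := by
        gcongr
        · exact hx.norm_le hs
        · refine (((hy i).sub hx).norm_le hs).trans ?_
          gcongr
          exact hC ⟨i, rfl⟩

end HasW2Deriv

end SobolevPaths

section PiecewiseConstant

variable {E : Type*} [NormedAddCommGroup E] {N : ℕ} {t : ℕ → ℝ} {g : ℝ → E}

lemma integrableOn_Ioc_of_piecewise_const (ht : MonotoneOn t (Iic N))
    (hg : ∀ k < N, ∃ b, ∀ s ∈ Ico (t k) (t (k + 1)), g s = b) :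
    IntegrableOn g (Ioc (t 0) (t N)) := by
  have hle : t 0 ≤ t N := ht (mem_Iic.2 N.zero_le) (mem_Iic.2 le_rfl) N.zero_le
  refine (intervalIntegrable_iff_integrableOn_Ioc_of_le hle).1
    (IntervalIntegrable.trans_iterate fun k hk => ?_)
  obtain ⟨b, hb⟩ := hg k hk
  have hkk : t k ≤ t (k + 1) := ht hk.le hk k.le_succ
  rw [intervalIntegrable_iff_integrableOn_Ico_of_le hkk]
  exact (integrableOn_const (C := b) (by simp)).congr_fun (fun s hs => (hb s hs).symm)
    measurableSet_Ico

lemma memLp_two_of_piecewise_const (ht : MonotoneOn t (Iic N))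
    (hg : ∀ k < N, ∃ b, ∀ s ∈ Ico (t k) (t (k + 1)), g s = b) :
    MemLp g 2 (volume.restrict (Ioc (t 0) (t N))) := by
  refine (memLp_two_iff_integrable_sq_norm
    (integrableOn_Ioc_of_piecewise_const ht hg).aestronglyMeasurable).2
      (integrableOn_Ioc_of_piecewise_const ht fun k hk => ?_)
  obtain ⟨b, hb⟩ := hg k hk
  exact ⟨‖b‖ ^ 2, fun s hs => by rw [hb s hs]⟩

end PiecewiseConstant

lemma tendsto_zero_of_tendsto_add_add {ι : Type*} {l : Filter ι} {u v w : ι → ℝ}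
    (hu : ∀ i, 0 ≤ u i) (hv : ∀ i, 0 ≤ v i) (hw : ∀ i, 0 ≤ w i)
    (h : Tendsto (fun i => u i + v i + w i) l (nhds 0)) :
    Tendsto u l (nhds 0) ∧ Tendsto v l (nhds 0) ∧ Tendsto w l (nhds 0) :=
  ⟨squeeze_zero hu (fun i => by linarith [hv i, hw i]) h,
    squeeze_zero hv (fun i => by linarith [hu i, hw i]) h,
    squeeze_zero hw (fun i => by linarith [hu i, hv i]) h⟩

theorem stmt11_general {ι E F Θ : Type*} [SeminormedAddCommGroup E] [ProperSpace E]
    [SeminormedAddCommGroup F] [NormedSpace ℝ F] [PseudoMetricSpace Θ] [ProperSpace Θ]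
    {T : ℝ} {N : ι → ℕ} {t : ι → ℕ → ℝ} (ht0 : ∀ i, t i 0 = 0) (htN : ∀ i, t i (N i) = T)
    (ht : ∀ i, MonotoneOn (t i) (Iic (N i))) {S : Set Θ} {h : ℝ → E → F → Θ → F}
    (hcont : ContinuousOn (fun p : ℝ × E × F × Θ => h p.1 p.2.1 p.2.2.1 p.2.2.2)
      (Icc 0 T ×ˢ univ))
    {Lf Lh : ℝ} (hLf : 0 < Lf) (hLh : 0 < Lh)
    (hLip : ∀ θ ∈ S, ∀ s ∈ Icc 0 T, ∀ a b b', ‖h s a b θ - h s a b' θ‖ ≤ Lh * ‖b - b'‖)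
    (hmesh : ∀ i, ∀ k < N i, (Lf + Lh) * (t i (k + 1) - t i k) ≤ 2)
    {x : ι → ℝ → E} {R : ℝ} (hx : ∀ i, ∀ s ∈ Icc 0 T, ‖x i s‖ ≤ R)
    {ϑ : ι → Θ} (hϑS : ∀ i, ϑ i ∈ S) (hϑ : Bornology.IsBounded (range ϑ))
    {z : ι → ℝ → F} (hz0 : Bornology.IsBounded (range fun i => z i 0))
    (hz : ∀ i, IsTrapezoidalPath (N i) (t i) (fun s b => h s (x i s) b (ϑ i)) (z i)) :
    ∃ Lz > (0 : ℝ), ∀ i, ∀ s ∈ Icc 0 T, ∀ u ∈ Icc 0 T, ‖z i s - z i u‖ ≤ Lz * |s - u| := by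
  obtain ⟨Z, hZ, hzZ⟩ := hz0.exists_pos_norm_le
  have hK : IsCompact (Icc 0 T ×ˢ Metric.closedBall (0 : E) R ×ˢ closure (range ϑ)) :=
    isCompact_Icc.prod ((isCompact_closedBall _ _).prod hϑ.isCompact_closure)
  obtain ⟨c, hc, hgrowth⟩ := exists_linear_growth_of_isCompact
    (A := Icc 0 T ×ˢ Metric.closedBall (0 : E) R ×ˢ range ϑ)
    (g := fun p b => h p.1 p.2.1 b p.2.2) hK
    (prod_mono_right (prod_mono_right subset_closure))
    (hcont.comp (f := fun p : ℝ × E × Θ => (p.1, p.2.1, (0 : F), p.2.2)) (by fun_prop)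
      fun p hp => ⟨hp.1, mem_univ _⟩) hLh
    (by
      rintro ⟨s, a, _⟩ ⟨hs, -, i, rfl⟩ b
      simpa using hLip _ (hϑS i) s hs a b 0)
  have hρ : Lh / (Lf + Lh) < 1 := (div_lt_one (by positivity)).2 (by linarith)
  have hmeshρ : ∀ i, ∀ k < N i, Lh * (t i (k + 1) - t i k) ≤ 2 * (Lh / (Lf + Lh)) := by
    intro i k hk
    rw [mul_div_assoc', le_div_iff₀ (by positivity)]
    nlinarith [hmesh i k hk]
  have hnode : ∀ i, ∀ k ≤ N i, t i k ∈ Icc 0 T := fun i k hk =>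
    ⟨(ht0 i).symm.trans_le (ht i (mem_Iic.2 (Nat.zero_le _)) hk k.zero_le),
      (ht i hk (mem_Iic.2 le_rfl) hk).trans_eq (htN i)⟩
  refine ⟨Lh * (Real.exp (Lh / (1 - Lh / (Lf + Lh)) * T) * (c + Z)), by positivity,
    fun i s hs u hu => ?_⟩
  have hLipz := (hz i).lipschitzOnWith_of_linear_growth hLh.le hc.le hρ (ht i) (hmeshρ i)
    fun k hk => hgrowth (t i k, x i (t i k), ϑ i)
      ⟨hnode i k hk, by simpa using hx i _ (hnode i k hk), mem_range_self i⟩ _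
  rw [ht0, htN, sub_zero] at hLipz
  have hsu := hLipz.dist_le_mul s hs u hu
  rw [Real.coe_toNNReal _ (by positivity), dist_eq_norm, Real.dist_eq] at hsu
  refine hsu.trans ?_
  gcongr
  exact hzZ _ (mem_range_self i)

/-- Lipschitz equicontinuity of trapezoidally-discretized clean-state
paths: if `(x̂_i, ζ_i, ϑ_i) → (x, z₀, θ)` with `θ ∈ int S` and `ϑ_i ∈ S`, then the
associated trapezoidally-discretized clean-state paths `ẑ_i` are Lipschitz
equicontinuous on `[0, t_f]`. Piecewise linear `x̂_i ∈ PL(𝒫_i)` are encoded by their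
piecewise constant derivatives `d i`; the `W²` function `x` by the pair `(x, x')`. -/
theorem stmt11 {n q m : ℕ} (tf : ℝ) (htf : 0 < tf)
    (N : ℕ → ℕ) (hN1 : ∀ i, 1 ≤ N i) (tP : ℕ → ℕ → ℝ)
    (htP0 : ∀ i, tP i 0 = 0) (htPN : ∀ i, tP i (N i) = tf)
    (htPmono : ∀ i, ∀ k < N i, tP i k < tP i (k + 1))
    (hnested : ∀ i, ∀ k ≤ N i, ∃ k' ≤ N (i + 1), tP (i + 1) k' = tP i k)
    (hmesh : Tendsto (fun i => ⨆ k : Fin (N i), (tP i (k.1 + 1) - tP i k.1))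
      atTop (nhds 0))
    (S : Set (EuclideanSpace ℝ (Fin m)))
    (h : ℝ → EuclideanSpace ℝ (Fin n) → EuclideanSpace ℝ (Fin q) →
      EuclideanSpace ℝ (Fin m) → EuclideanSpace ℝ (Fin q))
    (hhc : Continuous fun p : ℝ × EuclideanSpace ℝ (Fin n) × EuclideanSpace ℝ (Fin q) ×
      EuclideanSpace ℝ (Fin m) => h p.1 p.2.1 p.2.2.1 p.2.2.2)
    (Lf Lh : ℝ) (hLf : 0 < Lf) (hLh : 0 < Lh)
    (hhLip : ∀ θ' ∈ S, ∀ t ∈ Icc (0:ℝ) tf,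
      ∀ (a a' : EuclideanSpace ℝ (Fin n)) (b b' : EuclideanSpace ℝ (Fin q)),
      ‖h t a b θ' - h t a' b' θ'‖ ≤ Lh * (‖a - a'‖ + ‖b - b'‖))
    (hmeshLip : ∀ i, ∀ k < N i, (Lf + Lh) * (tP i (k + 1) - tP i k) < 2)
    -- the limit point
    (x x' : ℝ → EuclideanSpace ℝ (Fin n))
    (hInt : IntegrableOn x' (Icc 0 tf))
    (hL2 : IntegrableOn (fun t => ‖x' t‖ ^ 2) (Icc 0 tf))
    (hAC : ∀ t ∈ Icc (0:ℝ) tf, x t = x 0 + ∫ s in Ioc (0:ℝ) t, x' s)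
    (z0 : EuclideanSpace ℝ (Fin q))
    (θ : EuclideanSpace ℝ (Fin m)) (hθ : θ ∈ interior S)
    -- the approximating sequence
    (xh d : ℕ → ℝ → EuclideanSpace ℝ (Fin n))
    (hdpc : ∀ i, ∀ k < N i, ∃ b : EuclideanSpace ℝ (Fin n),
      ∀ s ∈ Ico (tP i k) (tP i (k + 1)), d i s = b)
    (hxhAC : ∀ i, ∀ s ∈ Icc (0:ℝ) tf, xh i s = xh i 0 + ∫ u in Ioc (0:ℝ) s, d i u)
    (ζ : ℕ → EuclideanSpace ℝ (Fin q)) (ϑ : ℕ → EuclideanSpace ℝ (Fin m))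
    (hϑS : ∀ i, ϑ i ∈ S)
    (hconv : Tendsto (fun i =>
      Real.sqrt (‖xh i 0 - x 0‖ ^ 2 + ∫ s in Ioc (0:ℝ) tf, ‖d i s - x' s‖ ^ 2)
      + ‖ζ i - z0‖ + ‖ϑ i - θ‖) atTop (nhds 0))
    -- the trapezoidally-discretized clean-state paths
    (zh : ℕ → ℝ → EuclideanSpace ℝ (Fin q))
    (hzh0 : ∀ i, zh i 0 = ζ i)
    (hzhrec : ∀ i, ∀ k < N i, ∀ s ∈ Ioc (tP i k) (tP i (k + 1)),
      zh i s = zh i (tP i k) + ((s - tP i k) / 2) •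
        (h (tP i k) (xh i (tP i k)) (zh i (tP i k)) (ϑ i) +
         h (tP i (k + 1)) (xh i (tP i (k + 1))) (zh i (tP i (k + 1))) (ϑ i))) :
    ∃ Lz > (0:ℝ), ∀ i, ∀ t ∈ Icc (0:ℝ) tf, ∀ u ∈ Icc (0:ℝ) tf,
      ‖zh i t - zh i u‖ ≤ Lz * |t - u| := by
  obtain ⟨hx, hζ, hϑ⟩ := tendsto_zero_of_tendsto_add_add (fun _ => Real.sqrt_nonneg _)
    (fun _ => norm_nonneg _) (fun _ => norm_nonneg _) hconv
  have ht : ∀ i, MonotoneOn (tP i) (Iic (N i)) := fun i =>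
    monotoneOn_of_le_add_one ordConnected_Iic fun k _ _ hk => (htPmono i k hk).le
  have hxW2 : HasW2Deriv tf x x' :=
    ⟨((memLp_two_iff_integrable_sq_norm hInt.aestronglyMeasurable).2 hL2).mono_measure
      (Measure.restrict_mono_set _ Ioc_subset_Icc_self), hAC⟩
  have hxhW2 : ∀ i, HasW2Deriv tf (xh i) (d i) := fun i =>
    ⟨by simpa only [htP0, htPN] using memLp_two_of_piecewise_const (ht i) (hdpc i), hxhAC i⟩
  obtain ⟨R, hR⟩ := hxW2.exists_norm_le_of_bddAbove hxhW2 hx.bddAbove_range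
  exact stmt11_general htP0 htPN ht hhc.continuousOn hLf hLh
    (fun θ' hθ' s hs a b b' => by simpa using hhLip θ' hθ' s hs a a b b')
    (fun i k hk => (hmeshLip i k hk).le) hR hϑS
    (Metric.isBounded_range_of_tendsto _ (tendsto_iff_norm_sub_tendsto_zero.2 hϑ))
    (by simpa only [hzh0] using
      Metric.isBounded_range_of_tendsto _ (tendsto_iff_norm_sub_tendsto_zero.2 hζ)) hzhrec
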